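/- arXiv:1901.06480 — 2 statements merged into one kernel-verified Lean document; each statement's English description precedes it below -/
import Mathlib

section
/- If G is a finite uniformly generated group, then G is supersolvable. -/
/-- A chain `⊥ = c 0 < c 1 < ⋯ < c n = ⊤` of subgroups is *unrefinable* if each
`c i` is maximal in `c (i+1)` (i.e. consecutive terms form a covering pair). -/
def IsUnrefinableChain {G : Type*} [Group G] {n : ℕ} (c : Fin (n + 1) → Subgroup G) : Prop :=
  c 0 = ⊥ ∧ c (Fin.last n) = ⊤ ∧ ∀ i : Fin n, c i.castSucc ⋖ c i.succ

/-- The length `ℓ(G)`: the maximal length of an unrefinable chain of subgroups. -/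
noncomputable def groupLength (G : Type*) [Group G] : ℕ :=
  sSup {n | ∃ c : Fin (n + 1) → Subgroup G, IsUnrefinableChain c}

/-- The depth `λ(G)`: the minimal length of an unrefinable chain of subgroups. -/
noncomputable def groupDepth (G : Type*) [Group G] : ℕ :=
  sInf {n | ∃ c : Fin (n + 1) → Subgroup G, IsUnrefinableChain c}

/-- `d(G)`: the minimal number of generators of `G`. -/
noncomputable def minGen (G : Type*) [Group G] : ℕ :=
  sInf {n | ∃ S : Finset G, S.card = n ∧ Subgroup.closure (S : Set G) = ⊤}

/-- `m(G)`: the maximal size of an independent generating set of `G`. -/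
noncomputable def maxIndep (G : Type*) [Group G] : ℕ :=
  sSup {n | ∃ S : Finset G, S.card = n ∧ Subgroup.closure (S : Set G) = ⊤ ∧
    ∀ a ∈ S, Subgroup.closure ((S : Set G) \ {a}) < ⊤}

/-- Given a tuple `x : Fin d → G`, the chain of subgroups
`⟨⟩ ≤ ⟨x 0⟩ ≤ ⟨x 0, x 1⟩ ≤ ⋯ ≤ ⟨x 0, …, x (d-1)⟩`. -/
def partialClosure {G : Type*} [Group G] {d : ℕ} (x : Fin d → G) (i : Fin (d + 1)) :
    Subgroup G :=
  Subgroup.closure (x '' {j | (j : ℕ) < (i : ℕ)})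

/-- `G` is *`d`-uniformly generated* if strictly ascending chains
`1 < ⟨x 1⟩ < ⋯ < ⟨x 1, …, x d⟩` exist, and every such chain ends at `G`. -/
def DUnifGen (G : Type*) [Group G] (d : ℕ) : Prop :=
  (∃ x : Fin d → G, StrictMono (partialClosure x)) ∧
  ∀ x : Fin d → G, StrictMono (partialClosure x) → Subgroup.closure (Set.range x) = ⊤

/-- `G` is *uniformly generated* if it is `d(G)`-uniformly generated. -/
def UniformlyGenerated (G : Type*) [Group G] : Prop :=
  DUnifGen G (minGen G)

/-- `G` is elementary abelian: isomorphic to `(C_p)^k` for some prime `p`. -/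
def IsElementaryAbelian (G : Type*) [Group G] : Prop :=
  ∃ (p k : ℕ), p.Prime ∧ Nonempty (G ≃* (Fin k → Multiplicative (ZMod p)))

/-- `G` is supersolvable: it has a normal series (all terms normal in `G`)
with cyclic factors (each step is obtained by adjoining a single element). -/
def IsSupersolvableGroup (G : Type*) [Group G] : Prop :=
  ∃ (n : ℕ) (c : Fin (n + 1) → Subgroup G),
    c 0 = ⊥ ∧ c (Fin.last n) = ⊤ ∧ Monotone c ∧ (∀ i, (c i).Normal) ∧
    ∀ i : Fin n, ∃ g : G, c i.succ = c i.castSucc ⊔ Subgroup.zpowers g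

/-- `G` is isomorphic to `(C_p)^{k} ⋊ C_q` where `C_q` acts by a nontrivial scalar:
expressed internally via a normal elementary abelian `p`-subgroup `N`, an element `g`
of order `q` complementing it, whose conjugation action raises every element of `N`
to a fixed power `c` which is a nontrivial scalar of multiplicative order `q` mod `p`. -/
def IsScalarExtension (G : Type*) [Group G] : Prop :=
  ∃ (p q : ℕ), p.Prime ∧ q.Prime ∧
    ∃ (N : Subgroup G) (g : G) (c : ℕ),
      N.Normal ∧ (∀ a ∈ N, ∀ b ∈ N, a * b = b * a) ∧ (∀ a ∈ N, a ^ p = 1) ∧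
      orderOf g = q ∧
      N ⊔ Subgroup.zpowers g = ⊤ ∧ N ⊓ Subgroup.zpowers g = ⊥ ∧
      (∀ n ∈ N, g * n * g⁻¹ = n ^ c) ∧
      c % p ≠ 1 % p ∧ c ^ q % p = 1 % p

/-!
A strict chain of subgroups of length greater than `d` would yield, by choosing one element in each
step, an ascending chain `1 < ⟨x₁⟩ < ⋯ < ⟨x₁, …, x_d⟩` that does not end at `G`. Hence uniform
generation forces `ℓ(G) ≤ d(G)`. Adjoining elements one at a time to generators of a subgroup `H`
until they generate `G` gives a chain from `H` to `G` of length at least `d(G) - d(H)`; preceding it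
by a longest chain of `H` shows that `ℓ(H) ≤ d(H)`. This property of all subgroups passes to the
quotient by a nontrivial cyclic normal subgroup.

Let `x` have order `p`, the largest prime divisor of `|G|`. For every `g`, the subgroup `⟨x, g⟩` has
length at most `2`, so in it `⟨x⟩` is either normal or self-normalizing and maximal. In the latter
case Burnside's transfer theorem provides a complement, of prime order `q ≤ p`, so that `⟨x⟩` has
the smallest prime divisor of the group order as its index and is normal after all. Thus `⟨x⟩` is
normal in `G`, and induction applies to `G ⧸ ⟨x⟩`.
-/

open Order Subgroup

section Height

variable {α β : Type*}

theorem height_add_one_le_height_of_strictMono [Preorder α] [Preorder β] [OrderBot β]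
    {f : α → β} (hf : StrictMono f) (hbot : ∀ a, ⊥ < f a) (a : α) :
    height a + 1 ≤ height (f a) := by
  have : Nonempty {p : LTSeries α // p.last = a} := ⟨RelSeries.singleton _ a, rfl⟩
  rw [height_eq_iSup_last_eq, iSup_subtype', ENat.iSup_add]
  refine iSup_le ?_
  rintro ⟨p, rfl⟩
  have hhead : ⊥ < (p.map f hf).head := hbot p.head
  calc (p.length : ℕ∞) + 1 = ((p.map f hf).cons ⊥ hhead).length := by simp
    _ ≤ height ((p.map f hf).cons ⊥ hhead).last := length_le_height_last
    _ = height (f p.last) := by rw [RelSeries.last_cons, LTSeries.last_map]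

theorem height_add_coheight_le_height_top [Preorder α] [OrderTop α] (a : α) :
    height a + coheight a ≤ height (⊤ : α) := by
  rw [← WithBot.coe_le_coe, height_top_eq_krullDim,
    krullDim_eq_iSup_height_add_coheight_of_nonempty, WithBot.coe_le_coe]
  exact le_iSup (fun a : α => height a + coheight a) a

variable [PartialOrder α] [BoundedOrder α]

theorem eq_top_of_bot_lt_of_lt_of_height_top_le_two (h : height (⊤ : α) ≤ 2) {a b : α}
    (ha : ⊥ < a) (hab : a < b) : b = ⊤ := by
  by_contra hb
  have hlt : (2 : ℕ∞) < 3 := by norm_num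
  refine hlt.not_ge (le_trans ?_ h)
  calc (3 : ℕ∞) = height (⊥ : α) + 1 + 1 + 1 := by norm_num
    _ ≤ height a + 1 + 1 := by gcongr; exact height_add_one_le ha
    _ ≤ height b + 1 := by gcongr; exact height_add_one_le hab
    _ ≤ height (⊤ : α) := height_add_one_le (lt_top_iff_ne_top.2 hb)

theorem isAtom_of_height_top_le_two (h : height (⊤ : α) ≤ 2) {a : α} (hbot : a ≠ ⊥)
    (htop : a ≠ ⊤) : IsAtom a :=
  ⟨hbot, fun _ hb => by_contra fun hne => htop
    (eq_top_of_bot_lt_of_lt_of_height_top_le_two h (bot_lt_iff_ne_bot.2 hne) hb)⟩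

theorem isCoatom_of_height_top_le_two (h : height (⊤ : α) ≤ 2) {a : α} (hbot : a ≠ ⊥)
    (htop : a ≠ ⊤) : IsCoatom a :=
  ⟨htop, fun _ hb =>
    eq_top_of_bot_lt_of_lt_of_height_top_le_two h (bot_lt_iff_ne_bot.2 hbot) hb⟩

end Height

section NormalSubgroups

variable {G : Type*} [Group G] {P : Subgroup G}

theorem card_prime_of_isAtom [Finite P] (hP : IsAtom P) : (Nat.card P).Prime := by
  obtain ⟨p, hp, hdvd⟩ := Nat.exists_prime_and_dvd fun h => hP.1 (card_eq_one.1 h)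
  have := Fact.mk hp
  obtain ⟨a, ha⟩ := exists_prime_orderOf_dvd_card' p hdvd
  have hne : zpowers (a : G) ≠ ⊥ :=
    zpowers_ne_bot.2 fun h => hp.ne_one (by rw [← ha, ← orderOf_coe, h, orderOf_one])
  have heq : zpowers (a : G) = P := (hP.le_iff.1 (zpowers_le.2 a.2)).resolve_left hne
  rwa [← heq, Nat.card_zpowers, orderOf_coe, ha]

theorem normal_of_prime_index_le_prime_card (hcard : (Nat.card P).Prime)
    (hindex : P.index.Prime) (hle : P.index ≤ Nat.card P) : P.Normal := by
  refine normal_of_index_eq_minFac_card (le_antisymm ?_ ?_)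
  · have hG : (Nat.card G).minFac.Prime :=
      Nat.minFac_prime fun h => hcard.ne_one (Nat.dvd_one.1 (h ▸ card_subgroup_dvd_card P))
    have hdvd : (Nat.card G).minFac ∣ Nat.card P * P.index := by
      rw [card_mul_index]
      exact Nat.minFac_dvd _
    rcases hG.dvd_mul.1 hdvd with h | h
    · exact hle.trans ((Nat.prime_dvd_prime_iff_eq hG hcard).1 h).ge
    · exact ((Nat.prime_dvd_prime_iff_eq hG hindex).1 h).ge
  · exact Nat.minFac_le_of_dvd hindex.two_le P.index_dvd_card

variable [Finite G] {p : ℕ} [Fact p.Prime]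

theorem not_dvd_index_of_normalizer_eq (hP : IsPGroup p P)
    (hself : normalizer (P : Set G) = P) : ¬p ∣ P.index := by
  intro hdvd
  obtain ⟨n, hn⟩ := IsPGroup.iff_card.1 hP
  have hG : p ^ (n + 1) ∣ Nat.card G := by
    rw [← P.card_mul_index, hn, pow_succ]
    exact mul_dvd_mul_left _ hdvd
  have h := Sylow.prime_pow_dvd_card_normalizer hG hn
  rw [hself, hn, Nat.pow_dvd_pow_iff_le_right (Fact.out : p.Prime).one_lt] at h
  omega

theorem exists_isComplement'_of_normalizer_eq [IsMulCommutative P] (hP : IsPGroup p P)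
    (hself : normalizer (P : Set G) = P) : ∃ K : Subgroup G, K.IsComplement' P :=
  let Q : Sylow p G := hP.toSylow (not_dvd_index_of_normalizer_eq hP hself)
  ⟨_, MonoidHom.ker_transferSylow_isComplement' Q (hself.le.trans P.le_centralizer)⟩

theorem normal_of_largest_prime_card_of_height_top_le_two (hG : height (⊤ : Subgroup G) ≤ 2)
    (hP : (Nat.card P).Prime) (hmax : ∀ q, q.Prime → q ∣ Nat.card G → q ≤ Nat.card P) :
    P.Normal := by
  have := Fact.mk hP
  by_cases htop : P = ⊤
  · rw [htop]
    infer_instance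
  have hbot : P ≠ ⊥ := fun h => hP.ne_one (card_eq_one.2 h)
  rcases (isCoatom_of_height_top_le_two hG hbot htop).le_iff.1 le_normalizer with hN | hself
  · exact normalizer_eq_top_iff.1 hN
  have : IsCyclic P := isCyclic_of_prime_card rfl
  obtain ⟨K, hK⟩ :=
    exists_isComplement'_of_normalizer_eq (IsPGroup.of_card (pow_one _).symm) hself
  have hKbot : K ≠ ⊥ := by
    rintro rfl
    exact htop (isComplement'_bot_left.1 hK)
  have hKtop : K ≠ ⊤ := by
    rintro rfl
    exact hbot (isComplement'_top_left.1 hK)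
  have hKprime := card_prime_of_isAtom (isAtom_of_height_top_le_two hG hKbot hKtop)
  have hindex : P.index = Nat.card K := hK.index_eq_card
  exact normal_of_prime_index_le_prime_card hP (hindex ▸ hKprime)
    (hindex ▸ hmax _ hKprime (card_subgroup_dvd_card K))

end NormalSubgroups

section PartialClosure

variable {G : Type*} [Group G] {d : ℕ} {x : Fin d → G}

theorem partialClosure_le {i : Fin (d + 1)} {K : Subgroup G}
    (h : ∀ j : Fin d, j.castSucc < i → x j ∈ K) : partialClosure x i ≤ K :=
  (closure_le K).2 (Set.image_subset_iff.2 fun j hj => h j hj)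

theorem mem_partialClosure {i : Fin (d + 1)} {j : Fin d} (h : j.castSucc < i) :
    x j ∈ partialClosure x i :=
  subset_closure (Set.mem_image_of_mem x h)

theorem partialClosure_last : partialClosure x (Fin.last d) = closure (Set.range x) := by
  simp [partialClosure]

theorem strictMono_partialClosure (h : ∀ i, x i ∉ partialClosure x i.castSucc) :
    StrictMono (partialClosure x) :=
  Fin.strictMono_iff_lt_succ.2 fun i => SetLike.lt_iff_le_and_exists.2
    ⟨partialClosure_le fun _ hj => mem_partialClosure (hj.trans i.castSucc_lt_succ),
      x i, mem_partialClosure i.castSucc_lt_succ, h i⟩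

end PartialClosure

theorem DUnifGen.height_top_le {G : Type*} [Group G] {d : ℕ} (hG : DUnifGen G d) :
    height (⊤ : Subgroup G) ≤ d := by
  refine height_le fun t _ => Nat.cast_le.2 ?_
  by_contra! hd
  let s (i : Fin (d + 1)) : Subgroup G := t (i.castLE (by omega))
  have hs : StrictMono s := t.strictMono.comp (Fin.strictMono_castLE _)
  have hstep (i : Fin d) : ∃ y ∈ s i.succ, y ∉ s i.castSucc :=
    SetLike.exists_of_lt (hs i.castSucc_lt_succ)
  choose x hmem hnotMem using hstep
  have hle (i : Fin (d + 1)) : partialClosure x i ≤ s i :=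
    partialClosure_le fun j hj => hs.monotone (Fin.castSucc_lt_iff_succ_le.1 hj) (hmem j)
  have hclosure : closure (Set.range x) = ⊤ :=
    hG.2 x (strictMono_partialClosure fun i hi => hnotMem i (hle _ hi))
  have hlast : s (Fin.last d) = ⊤ := by
    rw [← top_le_iff, ← hclosure, ← partialClosure_last]
    exact hle _
  have hlt : s (Fin.last d) < t (Fin.last t.length) := t.strictMono (by simpa [Fin.lt_def])
  exact not_top_lt (hlast ▸ hlt)

section MinGen

variable {G : Type*} [Group G]

theorem minGen_le_encard {S : Set G} (hS : closure S = ⊤) : minGen G ≤ S.encard := by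
  rcases S.finite_or_infinite with hfin | hinf
  · rw [hfin.encard_eq_coe_toFinset_card, Nat.cast_le]
    exact Nat.sInf_le ⟨hfin.toFinset, rfl, by simpa⟩
  · simp [hinf.encard_eq]

theorem minGen_le_encard_add_coheight (S : Set G) :
    minGen G ≤ S.encard + coheight (closure S) := by
  induction h : coheight (closure S) using WellFoundedLT.induction generalizing S with
  | ind n ih =>
    subst h
    by_cases hclosure : closure S = ⊤
    · exact (minGen_le_encard hclosure).trans le_self_add
    by_cases hcoheight : coheight (closure S) = ⊤
    · simp [hcoheight]
    obtain ⟨g, -, hg⟩ := SetLike.exists_of_lt (lt_top_iff_ne_top.2 hclosure)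
    have hlt : closure S < closure (insert g S) := SetLike.lt_iff_le_and_exists.2
      ⟨closure_mono (S.subset_insert g), g, subset_closure (S.mem_insert g), hg⟩
    have hanti : coheight (closure (insert g S)) < coheight (closure S) :=
      coheight_strictAnti hlt
        ((coheight_anti hlt.le).trans_lt (lt_top_iff_ne_top.2 hcoheight))
    calc (minGen G : ℕ∞) ≤ (insert g S).encard + coheight (closure (insert g S)) :=
          ih _ hanti _ rfl
      _ ≤ S.encard + 1 + coheight (closure (insert g S)) := by
          gcongr
          exact Set.encard_insert_le S g
      _ = S.encard + (coheight (closure (insert g S)) + 1) := by ring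
      _ ≤ S.encard + coheight (closure S) := by
          gcongr
          exact coheight_add_one_le hlt

end MinGen

/-- Every subgroup `H` of `G` satisfies `ℓ(H) ≤ d(H)`. Here `ℓ(H)` is the order-theoretic height
of `H` in the subgroup lattice, and `d(H)` is replaced by the size of an arbitrary generating set,
the bound being vacuous when that set is infinite. -/
def LengthLeRank (G : Type*) [Group G] : Prop :=
  ∀ S : Set G, height (closure S) ≤ S.encard

theorem UniformlyGenerated.lengthLeRank {G : Type*} [Group G]
    (hG : UniformlyGenerated G) : LengthLeRank G := by
  intro S
  have hsum : height (closure S) + coheight (closure S) ≤ minGen G :=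
    (height_add_coheight_le_height_top _).trans (DUnifGen.height_top_le hG)
  have hfin : coheight (closure S) ≠ ⊤ :=
    ne_top_of_le_ne_top (ENat.natCast_ne_top _) (le_add_self.trans hsum)
  exact (ENat.add_le_add_iff_right hfin).1 (hsum.trans (minGen_le_encard_add_coheight S))

namespace LengthLeRank

variable {G : Type*} [Group G]

theorem of_surjective_of_ker_eq_zpowers {H : Type*} [Group H] (hG : LengthLeRank G) {f : G →* H}
    (hf : Function.Surjective f) {x : G} (hx : x ≠ 1) (hker : f.ker = zpowers x) :
    LengthLeRank H := by
  intro S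
  obtain ⟨T, hTS, hinj⟩ := Set.exists_image_eq_injOn_of_subset_range (f := f) (t := S)
    (by simp [hf.range_eq])
  have hcomap : (closure S).comap f = closure (insert x T) := by
    rw [← hTS, ← MonoidHom.map_closure, comap_map_eq, hker, Set.insert_eq, Subgroup.closure_union,
      zpowers_eq_closure, sup_comm]
  have hbot (A : Subgroup H) : ⊥ < A.comap f :=
    (bot_lt_iff_ne_bot.2 (hker ▸ zpowers_ne_bot.2 hx)).trans_le (MonoidHom.ker_le_comap f A)
  have hmono : StrictMono (comap f) := fun _ _ => (comap_lt_comap_of_surjective hf).2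
  refine (ENat.add_le_add_iff_right ENat.one_ne_top).1 ?_
  calc height (closure S) + 1 ≤ height ((closure S).comap f) :=
        height_add_one_le_height_of_strictMono hmono hbot _
    _ ≤ (insert x T).encard := hcomap ▸ hG _
    _ ≤ T.encard + 1 := Set.encard_insert_le T x
    _ = S.encard + 1 := by rw [← hTS, hinj.encard_image]

theorem height_top_closure_pair_le (hG : LengthLeRank G) (x y : G) :
    height (⊤ : Subgroup (closure {x, y})) ≤ 2 := by
  have hmono : StrictMono (map (closure {x, y}).subtype) :=
    fun _ _ => (map_lt_map_iff_of_injective (subtype_injective _)).2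
  calc height (⊤ : Subgroup (closure {x, y}))
      ≤ height (map (closure {x, y}).subtype ⊤) := height_le_height_apply_of_strictMono _ hmono _
    _ = height (closure {x, y}) := by rw [← MonoidHom.range_eq_map, range_subtype]
    _ ≤ ({x, y} : Set G).encard := hG _
    _ ≤ ({y} : Set G).encard + 1 := Set.encard_insert_le _ x
    _ = 2 := by rw [Set.encard_singleton, one_add_one_eq_two]

theorem normal_zpowers_of_largest_prime_orderOf [Finite G] (hG : LengthLeRank G) {x : G}
    (hx : (orderOf x).Prime) (hmax : ∀ q, q.Prime → q ∣ Nat.card G → q ≤ orderOf x) :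
    (zpowers x).Normal := by
  refine normalizer_eq_top_iff.1 (eq_top_iff.2 fun g _ => ?_)
  have hle : zpowers x ≤ closure {x, g} := zpowers_le.2 (subset_closure (by simp))
  have hcard : Nat.card ((zpowers x).subgroupOf (closure {x, g})) = orderOf x := by
    rw [Nat.card_congr (subgroupOfEquivOfLe hle).toEquiv, Nat.card_zpowers]
  have hnormal : ((zpowers x).subgroupOf (closure {x, g})).Normal :=
    normal_of_largest_prime_card_of_height_top_le_two (hG.height_top_closure_pair_le x g)
      (hcard ▸ hx) fun q hq hdvd => hcard ▸ hmax q hq (hdvd.trans (card_subgroup_dvd_card _))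
  exact (normal_subgroupOf_iff_le_normalizer hle).1 hnormal (subset_closure (by simp))

theorem exists_normal_zpowers [Finite G] [Nontrivial G] (hG : LengthLeRank G) :
    ∃ x : G, x ≠ 1 ∧ (zpowers x).Normal := by
  obtain ⟨p, hp, hmax⟩ := (Nat.card G).primeFactors.exists_max_image id
    (Nat.nonempty_primeFactors.2 Finite.one_lt_card)
  have := Fact.mk (Nat.prime_of_mem_primeFactors hp)
  obtain ⟨x, rfl⟩ := exists_prime_orderOf_dvd_card' p (Nat.dvd_of_mem_primeFactors hp)
  have hx : (orderOf x).Prime := Fact.out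
  have hnormal : (zpowers x).Normal :=
    hG.normal_zpowers_of_largest_prime_orderOf hx fun q hq hdvd =>
      hmax q (Nat.mem_primeFactors.2 ⟨hq, hdvd, Nat.card_pos.ne'⟩)
  exact ⟨x, fun h => hx.ne_one (h ▸ orderOf_one), hnormal⟩

end LengthLeRank

section Supersolvable

variable {G H : Type*} [Group G] [Group H]

theorem comap_sup_zpowers_apply {f : G →* H} (hf : Function.Surjective f) (A : Subgroup H)
    (g : G) : (A ⊔ zpowers (f g)).comap f = A.comap f ⊔ zpowers g := by
  rw [← comap_sup_eq f _ _ hf, ← MonoidHom.map_zpowers, comap_map_eq, sup_comm (zpowers g),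
    ← sup_assoc, sup_eq_left.2 (MonoidHom.ker_le_comap f A)]

theorem IsSupersolvableGroup.of_subsingleton [Subsingleton G] : IsSupersolvableGroup G :=
  ⟨0, fun _ => ⊥, rfl, Subsingleton.elim _ _, monotone_const, fun _ => normal_bot,
    fun i => i.elim0⟩

theorem IsSupersolvableGroup.of_surjective_of_ker_eq_zpowers {f : G →* H}
    (hf : Function.Surjective f) {x : G} (hker : f.ker = zpowers x)
    (hH : IsSupersolvableGroup H) : IsSupersolvableGroup G := by
  obtain ⟨n, c, hbot, htop, -, hnormal, hstep⟩ := hH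
  let c' : Fin (n + 2) → Subgroup G := Fin.cons ⊥ fun i => (c i).comap f
  have hstep' (i : Fin (n + 1)) : ∃ g : G, c' i.succ = c' i.castSucc ⊔ zpowers g := by
    cases i using Fin.cases with
    | zero => exact ⟨x, by simp [c', hbot, hker, MonoidHom.comap_bot]⟩
    | succ i =>
      obtain ⟨h, hh⟩ := hstep i
      obtain ⟨g, rfl⟩ := hf h
      refine ⟨g, ?_⟩
      simp only [c', ← Fin.succ_castSucc, Fin.cons_succ, hh]
      exact comap_sup_zpowers_apply hf _ g
  refine ⟨n + 1, c', rfl, ?_, ?_, ?_, hstep'⟩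
  · simp [c', ← Fin.succ_last, htop]
  · refine Fin.monotone_iff_le_succ.2 fun i => ?_
    obtain ⟨g, hg⟩ := hstep' i
    exact hg ▸ le_sup_left
  · exact Fin.cases normal_bot fun i => (hnormal i).comap f

end Supersolvable

theorem LengthLeRank.isSupersolvableGroup {G : Type*} [hgroup : Group G] [Finite G]
    (hG : LengthLeRank G) : IsSupersolvableGroup G := by
  induction G using Finite.induction_subsingleton_or_nontrivial generalizing hgroup with
  | hbase => exact .of_subsingleton
  | hstep G ih =>
    obtain ⟨x, hx, hnormal⟩ := hG.exists_normal_zpowers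
    have hcard : Nat.card (G ⧸ zpowers x) < Nat.card G := by
      rw [(zpowers x).card_eq_card_quotient_mul_card_subgroup]
      exact lt_mul_of_one_lt_right Nat.card_pos
        ((one_lt_card_iff_ne_bot _).2 (zpowers_ne_bot.2 hx))
    have hf := QuotientGroup.mk'_surjective (zpowers x)
    have hker := QuotientGroup.ker_mk' (zpowers x)
    exact .of_surjective_of_ker_eq_zpowers hf hker
      (ih _ hcard (hG.of_surjective_of_ker_eq_zpowers hf hx hker))

/-- a finite uniformly generated group is supersolvable. -/
theorem isSupersolvable_of_uniformlyGenerated (G : Type*) [Group G] [Finite G]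
    (hG : UniformlyGenerated G) : IsSupersolvableGroup G :=
  hG.lengthLeRank.isSupersolvableGroup
end

section
/- A finite group G satisfies ℓ(G) = λ(G) if and only if G is supersolvable (Iwasawa's theorem). -/
/-!
A finite group `G` satisfies `ℓ(G) = λ(G)` exactly when its subgroup lattice satisfies the
Jordan–Dedekind chain condition. Both this condition and supersolvability are equivalent to every
covering pair of subgroups having prime index.

If all covers have prime index, the length of an unrefinable chain is the number `Ω` of prime
factors of the index of its lower end in its upper end. Intersecting a cover `A ⋖ B` with a normal
cyclic series shows that supersolvable groups have prime covers. Conversely, prime covers make the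
Sylow subgroup for the largest prime normal, and a minimal normal subgroup inside its centre has
prime order (Huppert).

That the Jordan–Dedekind condition forces prime covers is proved by induction on `|G|`. If `G` has
a proper nontrivial normal subgroup `N`, refining `1 < N < G` gives a chain of maximal possible
length `Ω(|G|)`. If `G` is simple and nonabelian, let `p` be the smallest prime dividing `|G|`:
the normalizer of every nontrivial `p`-subgroup `D` has prime covers, so its elements of order prime
to `p` centralize `D`. As in the normal `p`-complement theorem of Frobenius, a Sylow `p`-subgroup
then controls its own fusion, and the focal subgroup theorem contradicts `G` being perfect.
-/

open ArithmeticFunction (cardFactors)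

section JordanDedekind

variable {α β : Type*}

/-- Finite chains in which each term is covered by the next. -/
abbrev CovBySeries (α : Type*) [Preorder α] :=
  RelSeries {(a, b) : α × α | a ⋖ b}

/-- The Jordan–Dedekind chain condition: any two unrefinable chains with the same ends have the
same length. -/
def IsJordanDedekind (α : Type*) [Preorder α] : Prop :=
  ∀ s t : CovBySeries α, s.head = t.head → s.last = t.last → s.length = t.length

theorem CovBySeries.head_le_last [Preorder α] (s : CovBySeries α) : s.head ≤ s.last :=
  LTSeries.head_le_last (s.map ⟨id, fun h ↦ CovBy.lt h⟩)

theorem CovBySeries.exists_of_le [PartialOrder α] [WellFoundedLT α] [WellFoundedGT α] {a b : α}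
    (h : a ≤ b) : ∃ s : CovBySeries α, s.head = a ∧ s.last = b := by
  obtain ⟨c, hhead, n, hlast, hc⟩ := exists_covBy_seq_of_wellFoundedLT_wellFoundedGT_of_le h
  exact ⟨⟨n, fun i ↦ c i, fun i ↦ hc i i.2⟩, hhead, hlast⟩

theorem CovBySeries.exists_map [Preorder α] [Preorder β] (f : α ↪o β)
    (hf : (Set.range f).OrdConnected) (s : CovBySeries α) :
    ∃ t : CovBySeries β, t.head = f s.head ∧ t.last = f s.last ∧ t.length = s.length :=
  ⟨s.map ⟨f, fun h ↦ CovBy.image f h hf⟩, rfl, rfl, rfl⟩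

theorem IsJordanDedekind.of_orderEmbedding [Preorder α] [Preorder β] (h : IsJordanDedekind β)
    (f : α ↪o β) (hf : (Set.range f).OrdConnected) : IsJordanDedekind α := by
  intro s t hst hst'
  obtain ⟨s', hs, hs', hs_len⟩ := CovBySeries.exists_map f hf s
  obtain ⟨t', ht, ht', ht_len⟩ := CovBySeries.exists_map f hf t
  rw [← hs_len, ← ht_len]
  exact h s' t' (by rw [hs, ht, hst]) (by rw [hs', ht', hst'])

theorem CovBySeries.exists_extend_bot_top [PartialOrder α] [BoundedOrder α] [WellFoundedLT α]
    [WellFoundedGT α] (a b : α) : ∃ k : ℕ, ∀ s : CovBySeries α, s.head = a → s.last = b →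
      ∃ t : CovBySeries α, t.head = ⊥ ∧ t.last = ⊤ ∧ t.length = s.length + k := by
  obtain ⟨u, hu, hu'⟩ := exists_of_le (bot_le : ⊥ ≤ a)
  obtain ⟨v, hv, hv'⟩ := exists_of_le (le_top : b ≤ ⊤)
  refine ⟨u.length + v.length, fun s hs hs' ↦
    ⟨(u.smash s (hu'.trans hs.symm)).smash v (by simp [hs', hv]), by simp [hu], by simp [hv'], ?_⟩⟩
  simp only [RelSeries.smash_length]
  omega

theorem isJordanDedekind_iff_bot_top [PartialOrder α] [BoundedOrder α] [WellFoundedLT α]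
    [WellFoundedGT α] : IsJordanDedekind α ↔
      {n | ∃ s : CovBySeries α, s.head = ⊥ ∧ s.last = ⊤ ∧ s.length = n}.Subsingleton := by
  constructor
  · rintro h _ ⟨s, hs, hs', rfl⟩ _ ⟨t, ht, ht', rfl⟩
    exact h s t (hs.trans ht.symm) (hs'.trans ht'.symm)
  · intro h s t hst hst'
    obtain ⟨k, hk⟩ := CovBySeries.exists_extend_bot_top s.head s.last
    have := h (hk s rfl rfl) (hk t hst.symm hst'.symm)
    omega

theorem csSup_eq_csInf_iff_subsingleton [ConditionallyCompleteLattice α] {s : Set α}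
    (hne : s.Nonempty) (ha : BddAbove s) (hb : BddBelow s) :
    sSup s = sInf s ↔ s.Subsingleton := by
  constructor
  · intro h a has b hbs
    have key : ∀ c ∈ s, c = sInf s := fun c hc ↦
      le_antisymm (h ▸ le_csSup ha hc) (csInf_le hb hc)
    exact (key a has).trans (key b hbs).symm
  · intro h
    obtain ⟨a, rfl⟩ := hne.exists_eq_singleton_or_nontrivial.resolve_right h.not_nontrivial
    simp

end JordanDedekind

section SubgroupLattice

variable {G : Type*} [Group G]

/-- Subgroups of a subgroup `H` of `G`, viewed as subgroups of `G`. -/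
def mapSubtypeEmbedding (H : Subgroup G) : Subgroup H ↪o Subgroup G :=
  (Subgroup.MapSubtype.orderIso H).toOrderEmbedding.trans (OrderEmbedding.subtype _)

/-- Subgroups of the quotient `G ⧸ N`, viewed as subgroups of `G` by taking preimages. -/
def comapMkEmbedding (N : Subgroup G) [N.Normal] : Subgroup (G ⧸ N) ↪o Subgroup G :=
  (QuotientGroup.comapMk'OrderIso N).toOrderEmbedding.trans (OrderEmbedding.subtype _)

theorem ordConnected_range_mapSubtypeEmbedding (H : Subgroup G) :
    (Set.range (mapSubtypeEmbedding H)).OrdConnected := by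
  have hrange : Set.range (mapSubtypeEmbedding H) = Set.Iic H :=
    ((Subgroup.MapSubtype.orderIso H).surjective.range_comp Subtype.val).trans
      Subtype.range_coe
  exact hrange ▸ Set.ordConnected_Iic

theorem ordConnected_range_comapMkEmbedding (N : Subgroup G) [N.Normal] :
    (Set.range (comapMkEmbedding N)).OrdConnected := by
  have hrange : Set.range (comapMkEmbedding N) = Set.Ici N :=
    ((QuotientGroup.comapMk'OrderIso N).surjective.range_comp Subtype.val).trans
      Subtype.range_coe
  exact hrange ▸ Set.ordConnected_Ici

theorem mapSubtypeEmbedding_bot (H : Subgroup G) : mapSubtypeEmbedding H ⊥ = ⊥ :=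
  Subgroup.map_bot _

theorem mapSubtypeEmbedding_top (H : Subgroup G) : mapSubtypeEmbedding H ⊤ = H :=
  (MonoidHom.range_eq_map _).symm.trans H.range_subtype

theorem comapMkEmbedding_bot (N : Subgroup G) [N.Normal] : comapMkEmbedding N ⊥ = N :=
  (MonoidHom.comap_bot _).trans (QuotientGroup.ker_mk' N)

theorem comapMkEmbedding_top (N : Subgroup G) [N.Normal] : comapMkEmbedding N ⊤ = ⊤ :=
  Subgroup.comap_top _

/-- Every maximal subgroup of every subgroup of `G` has prime index. This is the bridge between the
chain condition on the subgroup lattice and supersolvability. -/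
def HasPrimeCovers (G : Type*) [Group G] : Prop :=
  ∀ A B : Subgroup G, A ⋖ B → (A.relIndex B).Prime

theorem IsJordanDedekind.subgroup (h : IsJordanDedekind (Subgroup G)) (H : Subgroup G) :
    IsJordanDedekind (Subgroup H) :=
  h.of_orderEmbedding _ (ordConnected_range_mapSubtypeEmbedding H)

theorem IsJordanDedekind.quotient (h : IsJordanDedekind (Subgroup G)) (N : Subgroup G)
    [N.Normal] : IsJordanDedekind (Subgroup (G ⧸ N)) :=
  h.of_orderEmbedding _ (ordConnected_range_comapMkEmbedding N)

theorem HasPrimeCovers.subgroup (h : HasPrimeCovers G) (H : Subgroup G) :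
    HasPrimeCovers H := fun A B hAB ↦ by
  rw [← Subgroup.relIndex_map_map_of_injective A B H.subtype_injective]
  exact h _ _ (hAB.image _ (ordConnected_range_mapSubtypeEmbedding H))

theorem HasPrimeCovers.quotient (h : HasPrimeCovers G) (N : Subgroup G) [N.Normal] :
    HasPrimeCovers (G ⧸ N) := fun A B hAB ↦ by
  have hcomap := h _ _ (hAB.image _ (ordConnected_range_comapMkEmbedding N))
  change ((A.comap (QuotientGroup.mk' N)).relIndex (B.comap (QuotientGroup.mk' N))).Prime at hcomap
  rwa [Subgroup.relIndex_comap,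
    Subgroup.map_comap_eq_self_of_surjective (QuotientGroup.mk'_surjective N)] at hcomap

theorem exists_isUnrefinableChain_iff {n : ℕ} :
    (∃ c : Fin (n + 1) → Subgroup G, IsUnrefinableChain c) ↔
      ∃ s : CovBySeries (Subgroup G), s.head = ⊥ ∧ s.last = ⊤ ∧ s.length = n := by
  constructor
  · rintro ⟨c, hbot, htop, hc⟩
    exact ⟨⟨n, c, hc⟩, hbot, htop, rfl⟩
  · rintro ⟨s, hbot, htop, rfl⟩
    exact ⟨s, hbot, htop, s.step⟩

section Counting

variable [Finite G]

theorem relIndex_ne_zero_of_finite (A B : Subgroup G) : A.relIndex B ≠ 0 :=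
  (A.subgroupOf B).index_ne_zero_of_finite

theorem cardFactors_relIndex_add {A B C : Subgroup G} (hAB : A ≤ B) (hBC : B ≤ C) :
    cardFactors (A.relIndex B) + cardFactors (B.relIndex C) = cardFactors (A.relIndex C) := by
  rw [← Subgroup.relIndex_mul_relIndex A B C hAB hBC, ArithmeticFunction.cardFactors_mul
    (relIndex_ne_zero_of_finite A B) (relIndex_ne_zero_of_finite B C)]

theorem cardFactors_relIndex_pos {A B : Subgroup G} (h : A < B) :
    0 < cardFactors (A.relIndex B) :=
  ArithmeticFunction.cardFactors_pos_iff_one_lt.mpr <| Nat.one_lt_iff_ne_zero_and_ne_one.mpr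
    ⟨relIndex_ne_zero_of_finite A B, fun hone ↦ h.not_ge (Subgroup.relIndex_eq_one.mp hone)⟩

theorem CovBySeries.length_le_cardFactors (s : CovBySeries (Subgroup G)) :
    s.length ≤ cardFactors (s.head.relIndex s.last) := by
  induction s using RelSeries.inductionOn' with
  | singleton A => simp
  | snoc s B hB ih =>
    rw [RelSeries.head_snoc, RelSeries.last_snoc, RelSeries.snoc_length,
      ← cardFactors_relIndex_add (CovBySeries.head_le_last s) (CovBy.le hB)]
    have := cardFactors_relIndex_pos (CovBy.lt hB)
    omega

theorem HasPrimeCovers.length_eq_cardFactors (h : HasPrimeCovers G)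
    (s : CovBySeries (Subgroup G)) : s.length = cardFactors (s.head.relIndex s.last) := by
  induction s using RelSeries.inductionOn' with
  | singleton A => simp
  | snoc s B hB ih =>
    rw [RelSeries.head_snoc, RelSeries.last_snoc, RelSeries.snoc_length,
      ← cardFactors_relIndex_add (CovBySeries.head_le_last s) (CovBy.le hB), ← ih,
      ArithmeticFunction.cardFactors_apply_prime (h _ _ hB)]

theorem HasPrimeCovers.isJordanDedekind (h : HasPrimeCovers G) :
    IsJordanDedekind (Subgroup G) := fun s t hst hst' ↦ by
  rw [h.length_eq_cardFactors, h.length_eq_cardFactors, hst, hst']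

theorem IsJordanDedekind.hasPrimeCovers_of_length_eq (h : IsJordanDedekind (Subgroup G))
    {s : CovBySeries (Subgroup G)} (hbot : s.head = ⊥) (htop : s.last = ⊤)
    (hlen : s.length = cardFactors (Nat.card G)) : HasPrimeCovers G := by
  intro A B hAB
  obtain ⟨a, ha, rfl⟩ := CovBySeries.exists_of_le (bot_le : ⊥ ≤ A)
  obtain ⟨b, rfl, hb⟩ := CovBySeries.exists_of_le (le_top : B ≤ ⊤)
  have htotal : a.length + b.length + 1 = cardFactors (Nat.card G) := by
    rw [← hlen, h s (a.append b hAB) (by simp [hbot, ha]) (by simp [htop, hb]),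
      RelSeries.append_length]
  have hsum : cardFactors (a.head.relIndex a.last) + cardFactors (a.last.relIndex b.head) +
      cardFactors (b.head.relIndex b.last) = cardFactors (Nat.card G) := by
    rw [ha, hb, cardFactors_relIndex_add bot_le hAB.le, cardFactors_relIndex_add bot_le le_top,
      Subgroup.relIndex_top_right, Subgroup.index_bot]
  have ha_le := CovBySeries.length_le_cardFactors a
  have hb_le := CovBySeries.length_le_cardFactors b
  have hAB_pos : 0 < cardFactors (a.last.relIndex b.head) := cardFactors_relIndex_pos hAB.lt
  exact ArithmeticFunction.cardFactors_eq_one_iff_prime.mp (by omega)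

theorem IsJordanDedekind.hasPrimeCovers_of_normal (h : IsJordanDedekind (Subgroup G))
    (N : Subgroup G) [N.Normal] (hN : HasPrimeCovers N) (hQ : HasPrimeCovers (G ⧸ N)) :
    HasPrimeCovers G := by
  obtain ⟨s, hs, hs'⟩ := CovBySeries.exists_of_le (bot_le : (⊥ : Subgroup N) ≤ ⊤)
  obtain ⟨t, ht, ht'⟩ := CovBySeries.exists_of_le (bot_le : (⊥ : Subgroup (G ⧸ N)) ≤ ⊤)
  obtain ⟨u, hu, hu', hu_len⟩ :=
    CovBySeries.exists_map _ (ordConnected_range_mapSubtypeEmbedding N) s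
  obtain ⟨v, hv, hv', hv_len⟩ :=
    CovBySeries.exists_map _ (ordConnected_range_comapMkEmbedding N) t
  replace hu : u.head = ⊥ := by rw [hu, hs, mapSubtypeEmbedding_bot]
  replace hu' : u.last = N := by rw [hu', hs', mapSubtypeEmbedding_top]
  replace hv : v.head = N := by rw [hv, ht, comapMkEmbedding_bot]
  replace hv' : v.last = ⊤ := by rw [hv', ht', comapMkEmbedding_top]
  refine h.hasPrimeCovers_of_length_eq (s := u.smash v (hu'.trans hv.symm)) (by simpa)
    (by simpa) ?_
  rw [RelSeries.smash_length, hu_len, hv_len, hN.length_eq_cardFactors,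
    hQ.length_eq_cardFactors, hs, hs', ht, ht', Subgroup.relIndex_bot_left,
    Subgroup.relIndex_bot_left, Subgroup.card_top, Subgroup.card_top,
    N.card_eq_card_quotient_mul_card_subgroup,
    ArithmeticFunction.cardFactors_mul Nat.card_pos.ne' Nat.card_pos.ne', add_comm]

theorem groupLength_eq_groupDepth_iff_isJordanDedekind :
    groupLength G = groupDepth G ↔ IsJordanDedekind (Subgroup G) := by
  simp only [groupLength, groupDepth, exists_isUnrefinableChain_iff]
  rw [isJordanDedekind_iff_bot_top]
  refine csSup_eq_csInf_iff_subsingleton ?_ ?_ (OrderBot.bddBelow _)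
  · obtain ⟨s, hbot, htop⟩ := CovBySeries.exists_of_le (bot_le : (⊥ : Subgroup G) ≤ ⊤)
    exact ⟨s.length, s, hbot, htop, rfl⟩
  · refine ⟨cardFactors (Nat.card G), ?_⟩
    rintro _ ⟨s, hbot, htop, rfl⟩
    simpa [hbot, htop] using CovBySeries.length_le_cardFactors s

end Counting

end SubgroupLattice

section Supersolvable

open scoped Pointwise

variable {G : Type*} [Group G]

theorem relIndex_eq_of_coe_eq_mul {A B N : Subgroup G} (h : (B : Set G) = N * A) :
    A.relIndex B = A.relIndex N := by
  have hNB : N ≤ B := fun n hn ↦ h.ge ⟨n, hn, 1, A.one_mem, mul_one n⟩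
  refine (Nat.card_eq_of_bijective _
    ⟨(Subgroup.quotientSubgroupOfEmbeddingOfLE A hNB).injective, ?_⟩).symm
  rintro ⟨b, hb⟩
  obtain ⟨n, hn, a, ha, rfl⟩ := h.le hb
  refine ⟨QuotientGroup.mk ⟨n, hn⟩, QuotientGroup.eq.mpr ?_⟩
  simpa [Subgroup.mem_subgroupOf] using ha

theorem relIndex_normal_sup (N H : Subgroup G) [N.Normal] :
    H.relIndex (N ⊔ H) = H.relIndex N :=
  relIndex_eq_of_coe_eq_mul (Subgroup.normal_mul N H)

theorem relIndex_dvd_relIndex_of_normal (K : Subgroup G) [K.Normal] {M L : Subgroup G}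
    (h : M ≤ L) : K.relIndex M ∣ K.relIndex L := by
  rw [← Subgroup.relIndex_subgroupOf h]
  exact Subgroup.relIndex_dvd_index_of_normal _ _

theorem relIndex_dvd_relIndex_of_covBy {A B K L : Subgroup G} [K.Normal] [L.Normal] (hAB : A ⋖ B)
    (hK : K ⊓ B ≤ A) (hL : ¬ L ⊓ B ≤ A) : A.relIndex B ∣ K.relIndex L := by
  have hsup : B ⊓ L ⊔ A = B :=
    (hAB.eq_or_eq le_sup_right (sup_le inf_le_left hAB.le)).resolve_left
      fun h ↦ hL (inf_comm L B ▸ h ▸ le_sup_left)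
  have hBLA : B ≤ L ⊔ A := hsup.ge.trans (sup_le_sup_right inf_le_right A)
  have hmul : (B : Set G) = (B ⊓ L : Subgroup G) * A := by
    rw [Subgroup.inf_mul_assoc B L A hAB.le, ← Subgroup.normal_mul, Set.inter_eq_left.mpr hBLA]
  calc A.relIndex B = A.relIndex (B ⊓ L) := relIndex_eq_of_coe_eq_mul hmul
    _ ∣ (K ⊓ (B ⊓ L)).relIndex (B ⊓ L) :=
      Subgroup.relIndex_dvd_of_le_left _ ((inf_le_inf_left K inf_le_left).trans hK)
    _ = K.relIndex (B ⊓ L) := Subgroup.inf_relIndex_right K _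
    _ ∣ K.relIndex L := relIndex_dvd_relIndex_of_normal K inf_le_right

theorem prime_card_of_isAtom {H : Subgroup G} (h : IsAtom H) : (Nat.card H).Prime := by
  obtain ⟨x, hx, hx1⟩ := H.bot_or_exists_ne_one.resolve_left h.1
  have hzpowers : Subgroup.zpowers x = H :=
    (h.le_iff.mp (Subgroup.zpowers_le.mpr hx)).resolve_left (by simpa)
  have hcomm : IsMulCommutative H := hzpowers ▸ inferInstance
  exact Group.is_simple_iff_prime_card.mp <| Subgroup.isSimpleGroup_iff.mpr
    ⟨h.1, fun K hK _ ↦ h.le_iff.mp hK⟩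

theorem relIndex_prime_of_covBy_of_normal {A B : Subgroup G} [A.Normal] (h : A ⋖ B) :
    (A.relIndex B).Prime := by
  have hker : (QuotientGroup.mk' A).ker = A := QuotientGroup.ker_mk' A
  have hcomap : comapMkEmbedding A (B.map (QuotientGroup.mk' A)) = B :=
    Subgroup.comap_map_eq_self (hker.trans_le h.le)
  have hatom : IsAtom (B.map (QuotientGroup.mk' A)) := by
    rwa [← bot_covBy_iff, ← (ordConnected_range_comapMkEmbedding A).apply_covBy_apply_iff,
      comapMkEmbedding_bot, hcomap]
  rw [← hker, Subgroup.relIndex_ker]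
  exact prime_card_of_isAtom hatom

theorem normal_of_le_zpowers {g : G} (hg : (Subgroup.zpowers g).Normal) {M : Subgroup G}
    (h : M ≤ Subgroup.zpowers g) : M.Normal := by
  refine ⟨fun m hm x ↦ ?_⟩
  obtain ⟨k, hk⟩ := Subgroup.mem_zpowers_iff.mp (hg.conj_mem g (Subgroup.mem_zpowers g) x)
  obtain ⟨j, rfl⟩ := Subgroup.mem_zpowers_iff.mp (h hm)
  rw [← conj_zpow, ← hk, ← zpow_mul, mul_comm, zpow_mul]
  exact zpow_mem hm k

theorem normal_of_le_sup_zpowers {K M : Subgroup G} [K.Normal] {g : G}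
    (hL : (K ⊔ Subgroup.zpowers g).Normal) (hKM : K ≤ M) (hML : M ≤ K ⊔ Subgroup.zpowers g) :
    M.Normal := by
  set f := QuotientGroup.mk' K
  have hker : f.ker = K := QuotientGroup.ker_mk' K
  have hmap : (K ⊔ Subgroup.zpowers g).map f = Subgroup.zpowers (f g) := by
    rw [Subgroup.map_sup, MonoidHom.map_zpowers, (Subgroup.map_eq_bot_iff K).mpr hker.ge,
      bot_sup_eq]
  have hMf : (M.map f).Normal :=
    normal_of_le_zpowers (hmap ▸ hL.map f (QuotientGroup.mk'_surjective K))
      ((Subgroup.map_mono hML).trans_eq hmap)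
  exact Subgroup.comap_map_eq_self (hker.trans_le hKM) ▸ hMf.comap f

-- Inside the cyclic factor `K⟨g⟩/K` every subgroup is normal, so the least `M ≥ K` with
-- `M ⊓ B ≰ A` and a maximal `M' ⋖ M` above `K` give a factor `M/M'` of prime order.
theorem relIndex_prime_of_covBy_of_sup_zpowers [Finite G] {A B K : Subgroup G} [K.Normal] {g : G}
    (hL : (K ⊔ Subgroup.zpowers g).Normal) (hAB : A ⋖ B) (hKA : K ⊓ B ≤ A)
    (hLA : ¬ (K ⊔ Subgroup.zpowers g) ⊓ B ≤ A) : (A.relIndex B).Prime := by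
  obtain ⟨M, ⟨hKM, hML, hMA⟩, hmin⟩ := exists_minimal_of_wellFoundedLT
    (fun M : Subgroup G ↦ K ≤ M ∧ M ≤ K ⊔ Subgroup.zpowers g ∧ ¬ M ⊓ B ≤ A)
    ⟨_, le_sup_left, le_rfl, hLA⟩
  obtain ⟨M', hKM', hM'M⟩ := (lt_of_le_of_ne hKM fun h ↦ hMA (h ▸ hKA)).exists_le_covby
  have hM : M.Normal := normal_of_le_sup_zpowers hL hKM hML
  have hM' : M'.Normal := normal_of_le_sup_zpowers hL hKM' (hM'M.le.trans hML)
  have hM'A : M' ⊓ B ≤ A := not_not.mp fun h ↦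
    hM'M.lt.not_ge (hmin ⟨hKM', hM'M.le.trans hML, h⟩ hM'M.le)
  have hprime : (M'.relIndex M).Prime := relIndex_prime_of_covBy_of_normal hM'M
  have hdvd : A.relIndex B ∣ M'.relIndex M := relIndex_dvd_relIndex_of_covBy hAB hM'A hMA
  rwa [(hprime.eq_one_or_self_of_dvd _ hdvd).resolve_left fun h ↦
    hAB.lt.not_ge (Subgroup.relIndex_eq_one.mp h)]

theorem IsSupersolvableGroup.hasPrimeCovers [Finite G] (h : IsSupersolvableGroup G) :
    HasPrimeCovers G := by
  obtain ⟨n, c, hbot, htop, -, hnormal, hcyclic⟩ := h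
  intro A B hAB
  by_contra hprime
  have hle : ∀ i, c i ⊓ B ≤ A := fun i ↦ by
    induction i using Fin.induction with
    | zero => simp [hbot]
    | succ i ih =>
      obtain ⟨g, hg⟩ := hcyclic i
      have := hnormal i.castSucc
      by_contra hnot
      exact hprime (relIndex_prime_of_covBy_of_sup_zpowers (hg ▸ hnormal i.succ) hAB ih
        (hg ▸ hnot))
  exact hAB.lt.not_ge (by simpa [htop] using hle (Fin.last n))

end Supersolvable

section PrimeCovers

theorem exists_prime_dvd_forall_prime_dvd_le {n : ℕ} (hn : 1 < n) :
    ∃ r : ℕ, r.Prime ∧ r ∣ n ∧ ∀ q : ℕ, q.Prime → q ∣ n → q ≤ r := by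
  obtain ⟨r, hr, hmax⟩ :=
    n.primeFactors.exists_max_image id (Nat.nonempty_primeFactors.mpr hn)
  exact ⟨r, Nat.prime_of_mem_primeFactors hr, Nat.dvd_of_mem_primeFactors hr, fun q hq hdvd ↦
    hmax q (Nat.mem_primeFactors.mpr ⟨hq, hdvd, (zero_lt_one.trans hn).ne'⟩)⟩

variable {G : Type*} [Group G]

theorem le_normalCore_of_index_lt [Finite G] {r : ℕ} [Fact r.Prime] {P M : Subgroup G}
    (hP : IsPGroup r P) (hPM : M.index < r) : P ≤ M.normalCore := by
  rw [Subgroup.normalCore_eq_ker, ← Subgroup.map_eq_bot_iff]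
  set f := MulAction.toPermHom G (G ⧸ M)
  have hcop : (Nat.card (P.map f)).Coprime M.index.factorial := by
    obtain ⟨k, hk⟩ := IsPGroup.iff_card.mp (hP.map f)
    rw [hk]
    exact Nat.Coprime.pow_left k ((Fact.out : r.Prime).coprime_factorial_of_lt hPM)
  have hdvd : Nat.card (P.map f) ∣ M.index.factorial := by
    rw [Subgroup.index, ← Nat.card_perm]
    exact (P.map f).card_subgroup_dvd_card
  exact Subgroup.card_eq_one.mp (hcop.eq_one_of_dvd hdvd)

theorem HasPrimeCovers.normal_of_isPGroup [Finite G] (h : HasPrimeCovers G) {r : ℕ}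
    [Fact r.Prime] {P : Subgroup G} (hP : IsPGroup r P)
    (hr : ∀ q : ℕ, q.Prime → q ∣ P.index → q < r) : P.Normal := by
  rw [← Subgroup.normalizer_eq_top_iff]
  refine (eq_top_or_exists_le_coatom _).resolve_right ?_
  rintro ⟨M, hM, hPM⟩
  have hprime : M.index.Prime := by
    simpa only [Subgroup.relIndex_top_right] using h M ⊤ (covBy_top_iff.mpr hM)
  have hlt : M.index < r :=
    hr _ hprime (Subgroup.index_dvd_of_le (Subgroup.le_normalizer.trans hPM))
  have hndvd : ¬ r ∣ P.index := fun hdvd ↦ (hr r Fact.out hdvd).false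
  have hfrattini : Subgroup.normalizer (P : Set G) ⊔ M.normalCore = ⊤ :=
    (hP.toSylow hndvd).normalizer_sup_eq_top' (le_normalCore_of_index_lt hP hlt)
  exact hM.1 (top_le_iff.mp (hfrattini.ge.trans (sup_le hPM M.normalCore_le)))

theorem covBy_sup_of_minimal {N H : Subgroup G} [N.Normal] (hdisj : Disjoint N H) (hN : N ≠ ⊥)
    (hmin : ∀ K ≤ N, K ≠ ⊥ → H ≤ Subgroup.normalizer (K : Set G) → K = N) : H ⋖ N ⊔ H := by
  refine ⟨lt_of_le_of_ne le_sup_right fun heq ↦ hN ?_, fun K hHK hK ↦ ?_⟩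
  · exact hdisj.eq_bot_of_le (le_sup_left.trans heq.ge)
  have hmodular : K ≤ N ⊓ K ⊔ H := fun k hk ↦ by
    obtain ⟨n, hn, x, hx, rfl⟩ := Subgroup.mem_sup_of_normal_left.mp (hK.le hk)
    exact Subgroup.mul_mem_sup ⟨hn, (K.mul_mem_cancel_right (hHK.le hx)).mp hk⟩ hx
  have hnormalizes : H ≤ Subgroup.normalizer ((N ⊓ K : Subgroup G) : Set G) := by
    refine hHK.le.trans (le_trans ?_ (Subgroup.inf_normalizer_le_normalizer_inf))
    simp [Subgroup.normalizer_eq_top, Subgroup.le_normalizer]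
  have hbot : N ⊓ K ≠ ⊥ := fun hbot ↦ hHK.not_ge (by simpa [hbot] using hmodular)
  exact hK.not_ge (sup_le (inf_eq_left.mp (hmin _ inf_le_left hbot hnormalizes)) hHK.le)

theorem HasPrimeCovers.prime_card_of_minimal (h : HasPrimeCovers G) {N H : Subgroup G} [N.Normal]
    (hdisj : Disjoint N H) (hN : N ≠ ⊥)
    (hmin : ∀ K ≤ N, K ≠ ⊥ → H ≤ Subgroup.normalizer (K : Set G) → K = N) :
    (Nat.card N).Prime := by
  have hprime := h _ _ (covBy_sup_of_minimal hdisj hN hmin)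
  rwa [relIndex_normal_sup, ← Subgroup.inf_relIndex_right, hdisj.symm.eq_bot,
    Subgroup.relIndex_bot_left] at hprime

theorem normal_of_le_map_center_of_sup_eq_top {P H K : Subgroup G}
    (hKP : K ≤ (Subgroup.center P).map P.subtype)
    (hHK : H ≤ Subgroup.normalizer (K : Set G)) (hsup : P ⊔ H = ⊤) : K.Normal := by
  rw [← Subgroup.normalizer_eq_top_iff, ← top_le_iff, ← hsup, sup_le_iff]
  refine ⟨?_, hHK⟩
  refine Subgroup.le_normalizer_iff.mpr fun x hx k hk ↦ ?_
  obtain ⟨z, hz, rfl⟩ := hKP hk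
  have hxz : x * z = z * x := congrArg Subtype.val (Subgroup.mem_center_iff.mp hz ⟨x, hx⟩)
  rwa [P.subtype_apply, hxz, mul_inv_cancel_right]

-- With `r` the largest prime divisor of `|G|`, a Sylow `r`-subgroup `P` is normal, hence has a
-- complement `H`. A minimal normal subgroup of `G` inside `Z(P)` is minimal among the nontrivial
-- `H`-invariant subgroups, so `H` is maximal in `N ⊔ H`.
theorem HasPrimeCovers.exists_normal_prime_card [Finite G] [Nontrivial G]
    (h : HasPrimeCovers G) : ∃ N : Subgroup G, N.Normal ∧ (Nat.card N).Prime := by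
  obtain ⟨r, hr, hdvd, hmax⟩ := exists_prime_dvd_forall_prime_dvd_le (Finite.one_lt_card (α := G))
  have : Fact r.Prime := ⟨hr⟩
  obtain ⟨P⟩ : Nonempty (Sylow r G) := inferInstance
  have hP : (P : Subgroup G).Normal := h.normal_of_isPGroup P.isPGroup' fun q hq hqP ↦
    lt_of_le_of_ne (hmax q hq (hqP.trans (Subgroup.index_dvd_card _)))
      fun heq ↦ P.not_dvd_index (heq ▸ hqP)
  set Z : Subgroup G := (Subgroup.center P).map (P : Subgroup G).subtype
  have hZ : Z ≠ ⊥ := by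
    have : Nontrivial P := (Subgroup.nontrivial_iff_ne_bot _).mpr (P.ne_bot_of_dvd_card hdvd)
    rw [Ne, Subgroup.map_eq_bot_iff_of_injective _ (Subgroup.subtype_injective _)]
    exact P.isPGroup'.bot_lt_center.ne'
  obtain ⟨N, ⟨hN, hNbot, hNZ⟩, hmin⟩ := exists_minimal_of_wellFoundedLT
    (fun N : Subgroup G ↦ N.Normal ∧ N ≠ ⊥ ∧ N ≤ Z) ⟨Z, inferInstance, hZ, le_rfl⟩
  obtain ⟨H, hH⟩ := Subgroup.exists_right_complement'_of_coprime P.card_coprime_index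
  refine ⟨N, hN, h.prime_card_of_minimal
    (hH.disjoint.mono_left (hNZ.trans (Subgroup.map_subtype_le _))) hNbot fun K hKN hK hHK ↦ ?_⟩
  have hKnormal : K.Normal :=
    normal_of_le_map_center_of_sup_eq_top (hKN.trans hNZ) hHK hH.sup_eq_top
  exact hKN.antisymm (hmin ⟨hKnormal, hK, hKN.trans hNZ⟩ hKN)

theorem IsSupersolvableGroup.of_quotient_zpowers {g : G} [hg : (Subgroup.zpowers g).Normal]
    (h : IsSupersolvableGroup (G ⧸ Subgroup.zpowers g)) : IsSupersolvableGroup G := by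
  obtain ⟨n, c, hbot, htop, hmono, hnormal, hcyclic⟩ := h
  set f := QuotientGroup.mk' (Subgroup.zpowers g)
  have hf : Function.Surjective f := QuotientGroup.mk'_surjective _
  have hzero : (c 0).comap f = Subgroup.zpowers g := by
    rw [hbot, MonoidHom.comap_bot, QuotientGroup.ker_mk']
  refine ⟨n + 1, Fin.cons ⊥ fun i ↦ (c i).comap f, rfl, ?_, ?_, ?_, ?_⟩
  · simp [← Fin.succ_last, htop]
  · refine Fin.monotone_iff_le_succ.mpr (Fin.cases bot_le fun i ↦ ?_)
    exact Subgroup.comap_mono (hmono i.castSucc_le_succ)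
  · exact Fin.cases (inferInstanceAs (⊥ : Subgroup G).Normal) fun i ↦ (hnormal i).comap f
  · refine Fin.cases ⟨g, by simpa using hzero⟩ fun i ↦ ?_
    obtain ⟨x, hx⟩ := hcyclic i
    obtain ⟨x, rfl⟩ := hf x
    refine ⟨x, ?_⟩
    change (c i.succ).comap f = (c i.castSucc).comap f ⊔ Subgroup.zpowers x
    rw [hx, ← Subgroup.comap_map_eq_self (f := f) ((Subgroup.ker_le_comap f _).trans le_sup_left),
      Subgroup.map_sup, MonoidHom.map_zpowers, Subgroup.map_comap_eq_self_of_surjective hf]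

theorem card_quotient_lt [Finite G] {N : Subgroup G} (hN : N ≠ ⊥) :
    Nat.card (G ⧸ N) < Nat.card G := by
  rw [N.card_eq_card_quotient_mul_card_subgroup]
  exact lt_mul_of_one_lt_right Nat.card_pos (N.one_lt_card_iff_ne_bot.mpr hN)

theorem HasPrimeCovers.isSupersolvableGroup [Finite G] (h : HasPrimeCovers G) :
    IsSupersolvableGroup G := by
  induction hn : Nat.card G using Nat.strong_induction_on generalizing G with
  | _ n ih =>
    rcases subsingleton_or_nontrivial G with _ | _
    · exact ⟨0, fun _ ↦ ⊥, rfl, Subsingleton.elim _ _, monotone_const, fun _ ↦ inferInstance,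
        fun i ↦ i.elim0⟩
    obtain ⟨N, hN, hprime⟩ := h.exists_normal_prime_card
    have : Fact (Nat.card N).Prime := ⟨hprime⟩
    obtain ⟨g, rfl⟩ := N.isCyclic_iff_exists_zpowers_eq_top.mp (isCyclic_of_prime_card rfl)
    have hbot : Subgroup.zpowers g ≠ ⊥ :=
      (Subgroup.one_lt_card_iff_ne_bot _).mp hprime.one_lt
    exact .of_quotient_zpowers (ih _ (hn ▸ card_quotient_lt hbot) (h.quotient _) rfl)

end PrimeCovers

section Fusion

open scoped commutatorElement

variable {G : Type*} [Group G] {p : ℕ}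

theorem conj_eq_of_mem_centralizer {s : Set G} {c y : G} (hc : c ∈ Subgroup.centralizer s)
    (hy : y ∈ s) : c * y * c⁻¹ = y :=
  mul_inv_eq_iff_eq_mul.mpr (Subgroup.mem_centralizer_iff.mp hc y hy).symm

theorem mem_smul_sylow_iff {P : Sylow p G} {g x : G} : x ∈ g • P ↔ g⁻¹ * x * g ∈ P := by
  rw [← SetLike.mem_coe, Sylow.coe_smul, Set.mem_smul_set_iff_inv_smul_mem, ← map_inv,
    MulAut.smul_def, MulAut.conj_apply, inv_inv, SetLike.mem_coe]

variable [Finite G] [Fact p.Prime]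

theorem isPGroup_quotient_of_forall_sylow_le {N : Subgroup G} [N.Normal]
    (h : ∀ r : ℕ, r.Prime → r ≠ p → r ∣ Nat.card G → ∀ R : Sylow r G, (R : Subgroup G) ≤ N) :
    IsPGroup p (G ⧸ N) := by
  refine IsPGroup.iff_card.mpr
    ⟨_, Nat.eq_prime_pow_of_unique_prime_dvd N.index_ne_zero_of_finite fun {r} hr hdvd ↦ ?_⟩
  by_contra hne
  have : Fact r.Prime := ⟨hr⟩
  obtain ⟨R⟩ : Nonempty (Sylow r G) := inferInstance
  exact R.not_dvd_index (hdvd.trans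
    (Subgroup.index_dvd_of_le (h r hr hne (hdvd.trans N.index_dvd_card) R)))

theorem sup_sylow_eq_top_of_isPGroup_quotient {N : Subgroup G} [N.Normal]
    (h : IsPGroup p (G ⧸ N)) (S : Sylow p G) : N ⊔ (S : Subgroup G) = ⊤ := by
  obtain ⟨k, hk⟩ := IsPGroup.iff_card.mp h
  have hpow : (N ⊔ (S : Subgroup G)).index ∣ p ^ k :=
    hk ▸ Subgroup.index_dvd_of_le le_sup_left
  have hcop : (N ⊔ (S : Subgroup G)).index.Coprime (p ^ k) :=
    (((Fact.out : p.Prime).coprime_iff_not_dvd.mpr fun hdvd ↦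
      S.not_dvd_index (hdvd.trans (Subgroup.index_dvd_of_le le_sup_right))).symm).pow_right k
  exact Subgroup.index_eq_one.mp (hcop.eq_one_of_dvd hpow)

theorem lt_inf_normalizer_of_isPGroup {D P : Subgroup G} (hP : IsPGroup p P) (hDP : D < P) :
    D < P ⊓ Subgroup.normalizer (D : Set G) := by
  have := hP.isNilpotent
  have hlt : D.subgroupOf P < ⊤ :=
    lt_top_iff_ne_top.mpr fun h ↦ hDP.not_ge (Subgroup.subgroupOf_eq_top.mp h)
  have hgrow := Group.normalizerCondition_of_isNilpotent _ hlt
  rw [← Subgroup.subgroupOf_normalizer_eq hDP.le] at hgrow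
  refine lt_of_le_not_ge (le_inf hDP.le Subgroup.le_normalizer) fun hle ↦ hgrow.not_ge ?_
  exact fun x hx ↦ hle ⟨x.2, hx⟩

/-- The Frobenius condition at `p`: the group `N_G(D) / C_G(D)` of automorphisms that `G` induces
on a `p`-subgroup `D` is always a `p`-group. -/
def FrobeniusCondition (p : ℕ) (G : Type*) [Group G] : Prop :=
  ∀ D : Subgroup G, IsPGroup p D → IsPGroup p (Subgroup.normalizer (D : Set G) ⧸
    (Subgroup.centralizer (D : Set G)).subgroupOf (Subgroup.normalizer (D : Set G)))

theorem FrobeniusCondition.exists_mul_eq (h : FrobeniusCondition p G) {D : Subgroup G}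
    (hD : IsPGroup p D) (S : Sylow p (Subgroup.normalizer (D : Set G)))
    (n : Subgroup.normalizer (D : Set G)) :
    ∃ c ∈ Subgroup.centralizer (D : Set G), ∃ s ∈ S, c * s = (n : G) := by
  have hn := (sup_sylow_eq_top_of_isPGroup_quotient (h D hD) S).ge (Subgroup.mem_top n)
  obtain ⟨c, hc, s, hs, rfl⟩ := Subgroup.mem_sup_of_normal_left.mp hn
  exact ⟨c, hc, s, hs, rfl⟩

theorem FrobeniusCondition.exists_sylow_inf_normalizer_le (h : FrobeniusCondition p G)
    {D : Subgroup G} {P : Sylow p G} (hDP : D ≤ P) (Q : Sylow p G) :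
    ∃ c ∈ Subgroup.centralizer (D : Set G), ∃ R : Sylow p G,
      (P : Subgroup G) ⊓ Subgroup.normalizer (D : Set G) ≤ R ∧
        (Q : Subgroup G) ⊓ Subgroup.normalizer (D : Set G) ≤ (c • R : Sylow p G) := by
  set N := Subgroup.normalizer (D : Set G)
  have hsub (P : Sylow p G) : IsPGroup p ((P : Subgroup G).subgroupOf N) :=
    P.isPGroup'.comap_of_injective _ N.subtype_injective
  obtain ⟨S, hPS⟩ := (hsub P).exists_le_sylow
  obtain ⟨T, hQT⟩ := (hsub Q).exists_le_sylow
  obtain ⟨n, rfl⟩ := MulAction.exists_smul_eq N S T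
  obtain ⟨c, hc, s, hs, hcs⟩ := h.exists_mul_eq (P.isPGroup'.to_le hDP) S n
  obtain ⟨R, hSR⟩ := (S.isPGroup'.map N.subtype).exists_le_sylow
  refine ⟨c, hc, R, fun x hx ↦ hSR ⟨⟨x, hx.2⟩, hPS hx.1, rfl⟩, fun x hx ↦ ?_⟩
  have hxS : n⁻¹ * ⟨x, hx.2⟩ * n ∈ S := mem_smul_sylow_iff.mp (hQT (x := ⟨x, hx.2⟩) hx.1)
  have hxR : (s * (n⁻¹ * ⟨x, hx.2⟩ * n) * s⁻¹ : N).1 ∈ R :=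
    hSR ⟨_, S.mul_mem (S.mul_mem hs hxS) (S.inv_mem hs), rfl⟩
  refine mem_smul_sylow_iff.mpr ?_
  simpa [← hcs, mul_assoc] using hxR

-- Both `P` and `Q` properly contain `D = P ⊓ Q`, hence so do their intersections with `N_G(D)`.
-- Some `R` and `c • R` contain the latter, so `P ⊓ R` and `(c • R) ⊓ Q` are larger than `D`.
theorem FrobeniusCondition.exists_smul_eq (h : FrobeniusCondition p G) (P Q : Sylow p G) :
    ∃ c ∈ Subgroup.centralizer ((P ⊓ Q : Subgroup G) : Set G), c • P = Q := by
  induction hD : (P ⊓ Q : Subgroup G) using WellFoundedGT.induction generalizing P Q with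
  | ind D ih =>
    by_cases hPQ : (P : Subgroup G) ≤ Q
    · exact ⟨1, one_mem _, by rw [one_smul]; exact Sylow.ext (P.is_maximal' Q.isPGroup' hPQ).symm⟩
    have hDP : D < P := hD ▸ inf_lt_left.mpr hPQ
    have hDQ : D < Q := hD ▸ inf_lt_right.mpr fun hQP ↦
      hPQ (Q.is_maximal' P.isPGroup' hQP).le
    obtain ⟨c, hc, R, hPR, hQR⟩ := h.exists_sylow_inf_normalizer_le hDP.le Q
    have hD_lt_PR : D < (P ⊓ R : Subgroup G) :=
      (lt_inf_normalizer_of_isPGroup P.isPGroup' hDP).trans_le (le_inf inf_le_left hPR)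
    have hD_lt_RQ : D < ((c • R : Sylow p G) ⊓ Q : Subgroup G) :=
      (lt_inf_normalizer_of_isPGroup Q.isPGroup' hDQ).trans_le (le_inf hQR inf_le_left)
    obtain ⟨a, ha, hPa⟩ := ih _ hD_lt_PR P R rfl
    obtain ⟨b, hb, hRb⟩ := ih _ hD_lt_RQ (c • R) Q rfl
    refine ⟨b * c * a, mul_mem (mul_mem ?_ hc) ?_, by rw [mul_smul, mul_smul, hPa, hRb]⟩
    · exact Subgroup.centralizer_le hD_lt_RQ.le hb
    · exact Subgroup.centralizer_le hD_lt_PR.le ha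

theorem FrobeniusCondition.exists_conj_eq (h : FrobeniusCondition p G) {P : Sylow p G} {x u : G}
    (hx : x ∈ P) (hxu : u * x * u⁻¹ ∈ P) : ∃ s ∈ P, u * x * u⁻¹ = s * x * s⁻¹ := by
  have hxuP : u * x * u⁻¹ ∈ u • P := mem_smul_sylow_iff.mpr (by simpa [mul_assoc] using hx)
  obtain ⟨c, hc, hcu⟩ := h.exists_smul_eq (u • P) P
  rw [smul_smul, Sylow.smul_eq_iff_mem_normalizer] at hcu
  obtain ⟨d, hd, ⟨s, _⟩, hs, hds⟩ :=
    h.exists_mul_eq P.isPGroup' (P.subtype Subgroup.le_normalizer) ⟨c * u, hcu⟩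
  replace hs : s ∈ P := hs
  replace hds : d * s = c * u := hds
  refine ⟨s, hs, ?_⟩
  calc u * x * u⁻¹ = c * (u * x * u⁻¹) * c⁻¹ :=
        (conj_eq_of_mem_centralizer hc ⟨hxuP, hxu⟩).symm
    _ = (c * u) * x * (c * u)⁻¹ := by group
    _ = (d * s) * x * (d * s)⁻¹ := by rw [hds]
    _ = d * (s * x * s⁻¹) * d⁻¹ := by group
    _ = s * x * s⁻¹ :=
        conj_eq_of_mem_centralizer hd (mul_mem (mul_mem hs hx) (inv_mem hs))

theorem FrobeniusCondition.focalSubgroup_le (h : FrobeniusCondition p G) (P : Sylow p G) :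
    (P : Subgroup G).focalSubgroup ≤ ⁅(P : Subgroup G), (P : Subgroup G)⁆ := by
  rw [Subgroup.focalSubgroup_def, Subgroup.closure_le]
  rintro _ ⟨hxu, x, hx, u, rfl⟩
  have hcomm (v : G) : ⁅x, v⁆ = x * (v * x⁻¹ * v⁻¹) := by
    simp only [commutatorElement_def, mul_assoc]
  rw [hcomm, Subgroup.mul_mem_cancel_left _ hx] at hxu
  obtain ⟨s, hs, hus⟩ := h.exists_conj_eq (inv_mem hx) hxu
  rw [SetLike.mem_coe, hcomm, hus, ← hcomm]
  exact Subgroup.commutator_mem_commutator hx hs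

theorem FrobeniusCondition.commutator_ne_top (h : FrobeniusCondition p G)
    (hp : p ∣ Nat.card G) : commutator G ≠ ⊤ := by
  intro hperfect
  obtain ⟨P⟩ : Nonempty (Sylow p G) := inferInstance
  have hP : (P : Subgroup G) ≤ ⁅(P : Subgroup G), (P : Subgroup G)⁆ := by
    simpa only [← Subgroup.commutator_inf_eq_focalSubgroup, hperfect, top_inf_eq] using
      h.focalSubgroup_le P
  have := P.isPGroup'.isNilpotent
  have : Nontrivial P := (Subgroup.nontrivial_iff_ne_bot _).mpr (P.ne_bot_of_dvd_card hp)
  refine (Group.IsSolvable.commutator_lt_top_of_nontrivial P).not_ge ?_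
  rwa [← Subgroup.map_subtype_le_map_subtype, ← MonoidHom.range_eq_map, Subgroup.range_subtype,
    Subgroup.map_subtype_commutator]

end Fusion

section Simple

variable {G : Type*} [Group G]

theorem HasPrimeCovers.of_prime_card (h : (Nat.card G).Prime) : HasPrimeCovers G := by
  intro A B hAB
  have : Fact (Nat.card G).Prime := ⟨h⟩
  obtain rfl := A.eq_bot_or_eq_top_of_prime_card.resolve_right (ne_top_of_lt hAB.lt)
  obtain rfl := B.eq_bot_or_eq_top_of_prime_card.resolve_left (ne_bot_of_gt hAB.lt)
  simpa using h

variable [Finite G]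

theorem HasPrimeCovers.le_centralizer (h : HasPrimeCovers G) {p r : ℕ} [Fact p.Prime]
    [Fact r.Prime] (hpr : p < r) {D R : Subgroup G} [D.Normal] (hD : IsPGroup p D)
    (hR : IsPGroup r R) : R ≤ Subgroup.centralizer (D : Set G) := by
  have hdisj : Disjoint D R := IsPGroup.disjoint_of_ne p r hpr.ne D R hD hR
  obtain ⟨a, ha⟩ := IsPGroup.iff_card.mp hD
  have hindex : (R.subgroupOf (D ⊔ R)).index ∣ p ^ a := by
    rw [← Subgroup.relIndex, relIndex_normal_sup, ← ha]
    exact Subgroup.index_dvd_card _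
  have hnormal : (R.subgroupOf (D ⊔ R)).Normal :=
    (h.subgroup (D ⊔ R)).normal_of_isPGroup
      (hR.comap_of_injective _ (Subgroup.subtype_injective _)) fun q hq hdvd ↦
        (Nat.le_of_dvd (Fact.out : p.Prime).pos
          (hq.dvd_of_dvd_pow (hdvd.trans hindex))).trans_lt hpr
  have hDR : D ≤ Subgroup.normalizer (R : Set G) :=
    le_sup_left.trans ((Subgroup.normal_subgroupOf_iff_le_normalizer le_sup_right).mp hnormal)
  rw [Subgroup.le_centralizer_iff, ← Subgroup.commutator_eq_bot_iff_le_centralizer, eq_bot_iff]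
  exact (le_inf (Subgroup.commutator_le_left D R)
    (Subgroup.le_normalizer_iff_commutator_le_right.mp hDR)).trans hdisj.le_bot

theorem frobeniusCondition_of_hasPrimeCovers_normalizer {p : ℕ} [Fact p.Prime]
    (hp : ∀ q : ℕ, q.Prime → q ∣ Nat.card G → p ≤ q)
    (h : ∀ D : Subgroup G, IsPGroup p D → D ≠ ⊥ →
      HasPrimeCovers (Subgroup.normalizer (D : Set G))) : FrobeniusCondition p G := by
  refine fun D hD ↦ isPGroup_quotient_of_forall_sylow_le fun r hr hne hdvd R ↦ ?_
  rcases eq_or_ne D ⊥ with rfl | hbot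
  · rw [Subgroup.centralizer_eq_top_iff_subset.mpr (by simp), Subgroup.top_subgroupOf]
    exact le_top
  have : Fact r.Prime := ⟨hr⟩
  have hpr : p < r := lt_of_le_of_ne
    (hp r hr (hdvd.trans (Subgroup.card_subgroup_dvd_card _))) hne.symm
  have hD' : IsPGroup p (D.subgroupOf (Subgroup.normalizer (D : Set G))) :=
    hD.comap_of_injective _ (Subgroup.subtype_injective _)
  have hR := (h D hD hbot).le_centralizer hpr hD' R.isPGroup'
  exact fun x hx ↦ Subgroup.mem_centralizer_iff.mpr fun d hd ↦ congrArg Subtype.val <|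
    Subgroup.mem_centralizer_iff.mp (hR hx) ⟨d, Subgroup.le_normalizer hd⟩ hd

theorem HasPrimeCovers.of_isSimpleGroup [IsSimpleGroup G]
    (h : ∀ H : Subgroup G, H ≠ ⊤ → HasPrimeCovers H) : HasPrimeCovers G := by
  rcases (inferInstance : (Subgroup.center G).Normal).eq_bot_or_eq_top with hcenter | hcenter
  · exfalso
    have : Fact (Nat.card G).minFac.Prime := ⟨Nat.minFac_prime Finite.one_lt_card.ne'⟩
    have hnormalizer (D : Subgroup G) (hD : IsPGroup (Nat.card G).minFac D) (hbot : D ≠ ⊥) :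
        HasPrimeCovers (Subgroup.normalizer (D : Set G)) := by
      refine h _ fun htop ↦ ?_
      obtain rfl :=
        ((Subgroup.normalizer_eq_top_iff.mp htop).eq_bot_or_eq_top).resolve_left hbot
      exact (hD.of_equiv Subgroup.topEquiv).bot_lt_center.ne' hcenter
    have hfrobenius : FrobeniusCondition (Nat.card G).minFac G :=
      frobeniusCondition_of_hasPrimeCovers_normalizer
        (fun q hq hdvd ↦ Nat.minFac_le_of_dvd hq.two_le hdvd) hnormalizer
    have hcommutator : commutator G = ⊥ :=
      ((inferInstance : (commutator G).Normal).eq_bot_or_eq_top).resolve_right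
        (hfrobenius.commutator_ne_top (Nat.minFac_dvd _))
    rw [commutator_eq_bot_iff_center_eq_top, hcenter] at hcommutator
    exact bot_ne_top hcommutator
  · let _ : CommGroup G := Group.commGroupOfCenterEqTop hcenter
    exact .of_prime_card IsSimpleGroup.prime_card

theorem IsJordanDedekind.hasPrimeCovers (h : IsJordanDedekind (Subgroup G)) :
    HasPrimeCovers G := by
  induction hn : Nat.card G using Nat.strong_induction_on generalizing G with
  | _ n ih =>
    subst hn
    have hsub (H : Subgroup G) (hH : H ≠ ⊤) : HasPrimeCovers H :=
      ih _ (lt_of_le_of_ne H.card_le_card_group fun heq ↦ hH (H.eq_top_of_card_eq heq))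
        (h.subgroup H) rfl
    rcases subsingleton_or_nontrivial G with _ | _
    · exact fun A B hAB ↦ absurd (Subsingleton.elim A B) hAB.lt.ne
    by_cases hsimple : IsSimpleGroup G
    · exact .of_isSimpleGroup hsub
    obtain ⟨N, hN, hbot, htop⟩ : ∃ N : Subgroup G, N.Normal ∧ N ≠ ⊥ ∧ N ≠ ⊤ := by
      simpa [isSimpleGroup_iff, ‹Nontrivial G›] using hsimple
    exact h.hasPrimeCovers_of_normal N (hsub N htop)
      (ih _ (card_quotient_lt hbot) (h.quotient N) rfl)

end Simple

/-- Iwasawa: a finite group satisfies `ℓ(G) = λ(G)` iff it is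
supersolvable. -/
theorem groupLength_eq_groupDepth_iff_isSupersolvable (G : Type*) [Group G] [Finite G] :
    groupLength G = groupDepth G ↔ IsSupersolvableGroup G := by
  rw [groupLength_eq_groupDepth_iff_isJordanDedekind]
  exact ⟨fun h ↦ h.hasPrimeCovers.isSupersolvableGroup, fun h ↦ h.hasPrimeCovers.isJordanDedekind⟩
end
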